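/- Let X₁, X₂ be disjoint finite sets with |X₁| = n₁, |X₂| = n₂. Let positive integers kᵢ, ℓᵢ (1 ≤ i ≤ m) be given and set b = max over i of max(kᵢ, ℓᵢ). Suppose 9b² ≤ n₁ and 9b² ≤ n₂. If F is an intersecting family of subsets of X₁ ∪ X₂ such that each F ∈ F satisfies |F ∩ X₁| = kᵢ and |F ∩ X₂| = ℓᵢ for some i, then |F| ≤ max( Σᵢ C(n₁,kᵢ)·C(n₂−1,ℓᵢ−1) , Σᵢ C(n₁−1,kᵢ−1)·C(n₂,ℓᵢ) ). -/

import Mathlib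

/-!
Katona's circle method, run on two circles at once. Identify `X₁` and `X₂` with cycles of length
`n₁` and `n₂` by random bijections: each `k`-subset of `X₁` is then equally likely to be the
preimage of a given arc of length `k`, and likewise for `X₂`. So `#F` is the average number of
pairs of arcs that come from `F`, weighted by `n₁.choose k * n₂.choose ℓ / (n₁ * n₂)`, and it
suffices to show that, for all bijections, the family provides at most `k i * n₂` pairs of shape
`(k i, ℓ i)` for every `i`, or at most `ℓ i * n₁` for every `i`.

Pairs of arcs intersect when they meet on one of the two cycles. Fix one pair. Unless all pairs
start close to it on the first cycle, or all do on the second, one finds two disjoint pairs. Say all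
start close to it on the first cycle, which can then be unrolled to an interval of `ℤ`. Group the
pairs by their starting point on the second cycle. If no group contains more than `k i` pairs of
shape `i`, the bound is immediate. If one does, then every group far from it on the second cycle has
fewer than `k j` pairs of each shape `j`, and for large `n₂` this gain outweighs the contribution
of the few groups near it.
-/

open Finset
open scoped BigOperators Pointwise

/-! ### Arcs of a cycle -/

section Cycle

variable {n : ℕ}

/-- The arc formed by the `k` consecutive points `a, a + 1, …, a + (k - 1)` of the cycle `ZMod n`.
It is the whole cycle when `k` exceeds `n`. -/
def cyclicArc (a : ZMod n) (k : ℕ) : Finset (ZMod n) :=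
  (range k).image fun d : ℕ => a + d

/-- The points of the cycle `ZMod n` at distance less than `r` from `a`. -/
noncomputable def cyclicBall (a : ZMod n) (r : ℕ) : Finset (ZMod n) :=
  (Ioo (-(r : ℤ)) r).image fun d : ℤ => a + d

theorem card_cyclicArc (a : ZMod n) {k : ℕ} (hk : k ≤ n) : #(cyclicArc a k) = k := by
  have hinj : Set.InjOn (fun d : ℕ => a + d) (range k) := fun d hd e he h =>
    CharP.natCast_injOn_Iio (ZMod n) n ((mem_range.mp hd).trans_le hk)
      ((mem_range.mp he).trans_le hk) (add_left_cancel h)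
  rw [cyclicArc, card_image_of_injOn hinj, card_range]

theorem exists_eq_add_of_not_disjoint_cyclicArc {a b : ZMod n} {k k' : ℕ}
    (h : ¬Disjoint (cyclicArc a k) (cyclicArc b k')) :
    ∃ d ∈ Ioo (-(k' : ℤ)) k, b = a + d := by
  obtain ⟨x, hxa, hxb⟩ := not_disjoint_iff.mp h
  obtain ⟨d, hd, rfl⟩ := mem_image.mp hxa
  obtain ⟨e, he, hbe⟩ := mem_image.mp hxb
  rw [mem_range] at hd he
  refine ⟨d - e, mem_Ioo.mpr ⟨by omega, by omega⟩, ?_⟩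
  push_cast
  linear_combination hbe

theorem mem_cyclicBall_of_not_disjoint_cyclicArc {a b : ZMod n} {k k' r : ℕ} (hk : k ≤ r)
    (hk' : k' ≤ r) (h : ¬Disjoint (cyclicArc a k) (cyclicArc b k')) : b ∈ cyclicBall a r := by
  obtain ⟨d, hd, rfl⟩ := exists_eq_add_of_not_disjoint_cyclicArc h
  exact mem_image_of_mem _ (Ioo_subset_Ioo (by omega) (by omega) hd)

theorem cyclicBall_mono (a : ZMod n) {r s : ℕ} (h : r ≤ s) : cyclicBall a r ⊆ cyclicBall a s :=
  image_subset_image (Ioo_subset_Ioo (by omega) (by omega))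

theorem mem_cyclicBall_comm {a b : ZMod n} {r : ℕ} (h : b ∈ cyclicBall a r) :
    a ∈ cyclicBall b r := by
  obtain ⟨d, hd, rfl⟩ := mem_image.mp h
  rw [mem_Ioo] at hd
  exact mem_image.mpr ⟨-d, mem_Ioo.mpr ⟨by omega, by omega⟩, by push_cast; ring⟩

theorem mem_cyclicBall_trans {a b c : ZMod n} {r s : ℕ} (hb : b ∈ cyclicBall a r)
    (hc : c ∈ cyclicBall b s) : c ∈ cyclicBall a (r + s) := by
  obtain ⟨d, hd, rfl⟩ := mem_image.mp hb
  obtain ⟨e, he, rfl⟩ := mem_image.mp hc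
  rw [mem_Ioo] at hd he
  exact mem_image.mpr ⟨d + e, mem_Ioo.mpr ⟨by omega, by omega⟩, by push_cast; ring⟩

theorem card_cyclicBall_le (a : ZMod n) (r : ℕ) : #(cyclicBall a r) ≤ 2 * r :=
  card_image_le.trans (by rw [Int.card_Ioo]; omega)

/-- At this scale arcs cannot meet by wrapping around the cycle, so that displacements are read off
in `ℤ`. -/
theorem sub_mem_Ioo_of_not_disjoint_cyclicArc {a : ZMod n} {k k' r w : ℕ} {d e : ℤ} (hk : k ≤ r)
    (hk' : k' ≤ r) (hn : 2 * w + r ≤ n) (hd : d ∈ Ioo (-(w : ℤ)) w) (he : e ∈ Ioo (-(w : ℤ)) w)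
    (h : ¬Disjoint (cyclicArc (a + (d : ZMod n)) k) (cyclicArc (a + (e : ZMod n)) k')) :
    e - d ∈ Ioo (-(k' : ℤ)) k := by
  obtain ⟨f, hf, hef⟩ := exists_eq_add_of_not_disjoint_cyclicArc h
  have hdvd : (n : ℤ) ∣ e - d - f := by
    rw [← ZMod.intCast_zmod_eq_zero_iff_dvd]
    push_cast
    linear_combination hef
  have hlt : |e - d - f| < n := by
    rw [mem_Ioo] at hd he hf
    exact abs_lt.mpr ⟨by omega, by omega⟩
  rwa [sub_eq_zero.mp (Int.eq_zero_of_abs_lt_dvd hdvd hlt)]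

end Cycle

theorem card_add_card_le_of_sub_mem_Ioo {R S : Finset ℤ} {k k' : ℕ} (hR : R.Nonempty)
    (hS : S.Nonempty) (h : ∀ d ∈ R, ∀ e ∈ S, e - d ∈ Ioo (-(k' : ℤ)) k) : #R + #S ≤ k + k' := by
  have hsub : S + -R ⊆ Ioo (-(k' : ℤ)) k := by
    rw [← sub_eq_add_neg, sub_subset_iff]
    exact fun e he d hd => h d hd e he
  have hle := (cauchy_davenport_add_of_linearOrder_isCancelAdd hS hR.neg).trans (card_le_card hsub)
  rw [Int.card_Ioo, card_neg] at hle
  have := hR.card_pos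
  have := hS.card_pos
  omega

/-! ### Pairs of arcs on two cycles -/

section Torus

variable {n₁ n₂ : ℕ} {ι : Type*}

/-- `P i` lists the pairs of starting points of pairs of arcs, of lengths `k i` and `ℓ i`, on the
cycles `ZMod n₁` and `ZMod n₂`. Any two of the listed pairs, of whatever shapes, meet on at least
one of the two cycles. -/
def ArcPairsIntersect (k ℓ : ι → ℕ) (P : ι → Finset (ZMod n₁ × ZMod n₂)) : Prop :=
  ∀ i j, ∀ p ∈ P i, ∀ q ∈ P j, ¬Disjoint (cyclicArc p.1 (k i)) (cyclicArc q.1 (k j)) ∨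
    ¬Disjoint (cyclicArc p.2 (ℓ i)) (cyclicArc q.2 (ℓ j))

/-- The row at height `c` of a set `S` of points of the torus, unrolled to an interval of `ℤ`
centred at `a` and of radius `w`. -/
noncomputable def unrolledRow (a : ZMod n₁) (w : ℕ) (S : Finset (ZMod n₁ × ZMod n₂))
    (c : ZMod n₂) : Finset ℤ :=
  {d ∈ Ioo (-(w : ℤ)) w | (a + (d : ZMod n₁), c) ∈ S}

theorem card_unrolledRow_le (a : ZMod n₁) (w : ℕ) (S : Finset (ZMod n₁ × ZMod n₂)) (c : ZMod n₂) :
    #(unrolledRow a w S c) ≤ 2 * w :=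
  (card_filter_le _ _).trans (by rw [Int.card_Ioo]; omega)

theorem card_le_sum_card_unrolledRow [NeZero n₂] {a : ZMod n₁} {w : ℕ}
    {S : Finset (ZMod n₁ × ZMod n₂)} (hS : ∀ p ∈ S, p.1 ∈ cyclicBall a w) :
    #S ≤ ∑ c, #(unrolledRow a w S c) := by
  have hcover : S ⊆ univ.biUnion fun c =>
      (unrolledRow a w S c).image fun d : ℤ => (a + (d : ZMod n₁), c) := by
    rintro ⟨x, c⟩ hp
    obtain ⟨d, hd, rfl⟩ := mem_image.mp (hS _ hp)
    exact mem_biUnion.mpr ⟨c, mem_univ c, mem_image_of_mem _ (mem_filter.mpr ⟨hd, hp⟩)⟩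
  exact (card_le_card hcover).trans
    (card_biUnion_le.trans (sum_le_sum fun _ _ => card_image_le))

namespace ArcPairsIntersect

variable {k ℓ : ι → ℕ} {P : ι → Finset (ZMod n₁ × ZMod n₂)} {r s : ℕ}

theorem swap (hP : ArcPairsIntersect k ℓ P) :
    ArcPairsIntersect ℓ k fun i => (P i).map (Equiv.prodComm _ _).toEmbedding := by
  intro i j p hp q hq
  obtain ⟨p', hp', rfl⟩ := mem_map.mp hp
  obtain ⟨q', hq', rfl⟩ := mem_map.mp hq
  exact (hP i j p' hp' q' hq').symm

theorem card_unrolledRow_lt (hP : ArcPairsIntersect k ℓ P) (hk : ∀ i, k i ≤ r) {w : ℕ}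
    (hn : 2 * w + r ≤ n₁) {a : ZMod n₁} {i j : ι} {c c' : ZMod n₂} (hkj : 0 < k j)
    (hbig : k i < #(unrolledRow a w (P i) c))
    (hcc' : Disjoint (cyclicArc c (ℓ i)) (cyclicArc c' (ℓ j))) :
    #(unrolledRow a w (P j) c') < k j := by
  rcases (unrolledRow a w (P j) c').eq_empty_or_nonempty with hempty | hne
  · rwa [hempty, card_empty]
  have hsum : #(unrolledRow a w (P i) c) + #(unrolledRow a w (P j) c') ≤ k i + k j := by
    refine card_add_card_le_of_sub_mem_Ioo (card_pos.mp (by omega)) hne fun d hd e he => ?_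
    obtain ⟨hdw, hdP⟩ := mem_filter.mp hd
    obtain ⟨hew, heP⟩ := mem_filter.mp he
    exact sub_mem_Ioo_of_not_disjoint_cyclicArc (hk i) (hk j) hn hdw hew
      ((hP i j _ hdP _ heP).resolve_right (not_not.mpr hcc'))
  omega

theorem card_le_of_mem_cyclicBall [NeZero n₂] (hP : ArcPairsIntersect k ℓ P)
    (hkpos : ∀ i, 0 < k i) (hk : ∀ i, k i ≤ r) (hℓ : ∀ i, ℓ i ≤ s) (hn₁ : 5 * r ≤ n₁)
    (hn₂ : 8 * r * s ≤ n₂) {a : ZMod n₁} (ha : ∀ i, ∀ p ∈ P i, p.1 ∈ cyclicBall a (2 * r))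
    (j : ι) : #(P j) ≤ k j * n₂ := by
  refine (card_le_sum_card_unrolledRow (ha j)).trans ?_
  by_cases! hsmall : ∀ i c, #(unrolledRow a (2 * r) (P i) c) ≤ k i
  · calc ∑ c, #(unrolledRow a (2 * r) (P j) c) ≤ ∑ _c : ZMod n₂, k j :=
          sum_le_sum fun c _ => hsmall j c
      _ = k j * n₂ := by simp [ZMod.card, mul_comm]
  obtain ⟨i, c, hbig⟩ := hsmall
  have hrow (c' : ZMod n₂) : #(unrolledRow a (2 * r) (P j) c') ≤
      (k j - 1) + if c' ∈ cyclicBall c s then 4 * r else 0 := by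
    split_ifs with hc'
    · have := card_unrolledRow_le a (2 * r) (P j) c'
      omega
    · have hfar : Disjoint (cyclicArc c (ℓ i)) (cyclicArc c' (ℓ j)) := by
        by_contra hmeet
        exact hc' (mem_cyclicBall_of_not_disjoint_cyclicArc (hℓ i) (hℓ j) hmeet)
      exact Nat.le_sub_one_of_lt (hP.card_unrolledRow_lt hk (by omega) (hkpos j) hbig hfar)
  calc ∑ c', #(unrolledRow a (2 * r) (P j) c')
      ≤ ∑ c' : ZMod n₂, ((k j - 1) + if c' ∈ cyclicBall c s then 4 * r else 0) :=
        sum_le_sum fun c' _ => hrow c'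
    _ = n₂ * (k j - 1) + #(cyclicBall c s) * (4 * r) := by
        simp [sum_add_distrib, ZMod.card, sum_ite_mem]
    _ ≤ n₂ * (k j - 1) + 2 * s * (4 * r) := by gcongr; exact card_cyclicBall_le c s
    _ ≤ n₂ * (k j - 1) + n₂ := by linarith
    _ = k j * n₂ := by rw [← Nat.mul_add_one, Nat.sub_add_cancel (hkpos j), mul_comm]

theorem exists_mem_cyclicBall (hP : ArcPairsIntersect k ℓ P) (hk : ∀ i, k i ≤ r)
    (hℓ : ∀ i, ℓ i ≤ s) :
    (∃ a, ∀ i, ∀ p ∈ P i, p.1 ∈ cyclicBall a (2 * r)) ∨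
      ∃ c, ∀ i, ∀ p ∈ P i, p.2 ∈ cyclicBall c (2 * s) := by
  by_cases! hempty : ∀ i, P i = ∅
  · exact Or.inl ⟨0, by simp [hempty]⟩
  obtain ⟨i₀, hne⟩ := hempty
  obtain ⟨⟨a, c⟩, h₀⟩ := hne
  have hball {i j p q} (hp : p ∈ P i) (hq : q ∈ P j) :
      q.1 ∈ cyclicBall p.1 r ∨ q.2 ∈ cyclicBall p.2 s :=
    (hP i j p hp q hq).imp (mem_cyclicBall_of_not_disjoint_cyclicArc (hk i) (hk j))
      (mem_cyclicBall_of_not_disjoint_cyclicArc (hℓ i) (hℓ j))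
  by_contra! hfar
  obtain ⟨i, p, hp, hpa⟩ := hfar.1 a
  obtain ⟨j, q, hq, hqc⟩ := hfar.2 c
  have hpc : p.2 ∈ cyclicBall c s :=
    (hball h₀ hp).resolve_left fun h => hpa (cyclicBall_mono a (by omega) h)
  have hqa : q.1 ∈ cyclicBall a r :=
    (hball h₀ hq).resolve_right fun h => hqc (cyclicBall_mono c (by omega) h)
  rw [two_mul] at hpa hqc
  rcases hball hp hq with h | h
  · exact hpa (mem_cyclicBall_trans hqa (mem_cyclicBall_comm h))
  · exact hqc (mem_cyclicBall_trans hpc h)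

theorem card_le_or_card_le [NeZero n₁] [NeZero n₂] (hP : ArcPairsIntersect k ℓ P)
    (hkpos : ∀ i, 0 < k i) (hℓpos : ∀ i, 0 < ℓ i) (hk : ∀ i, k i ≤ r) (hℓ : ∀ i, ℓ i ≤ s)
    (hn₁ : 8 * r * s ≤ n₁) (hn₂ : 8 * r * s ≤ n₂) :
    (∀ i, #(P i) ≤ k i * n₂) ∨ ∀ i, #(P i) ≤ ℓ i * n₁ := by
  refine (hP.exists_mem_cyclicBall hk hℓ).imp ?_ ?_
  · rintro ⟨a, ha⟩ i
    have hs : 0 < s := (hℓpos i).trans_le (hℓ i)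
    exact hP.card_le_of_mem_cyclicBall hkpos hk hℓ (by nlinarith) hn₂ ha i
  · rintro ⟨c, hc⟩ i
    have hr : 0 < r := (hkpos i).trans_le (hk i)
    rw [← card_map (Equiv.prodComm _ _).toEmbedding]
    refine hP.swap.card_le_of_mem_cyclicBall hℓpos hℓ hk (by nlinarith)
      (by rwa [mul_right_comm]) (a := c) (fun j p hp => ?_) i
    obtain ⟨q, hq, rfl⟩ := mem_map.mp hp
    exact hc j q hq

end ArcPairsIntersect

end Torus

/-! ### Averaging over bijections -/

theorem expect_map_equiv {α β M : Type*} [Fintype α] [Fintype β] [DecidableEq α] [DecidableEq β]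
    [AddCommMonoid M] [Module ℚ≥0 M] [Nonempty (α ≃ β)] (s : Finset α) (f : Finset β → M) :
    𝔼 σ : α ≃ β, f (s.map σ.toEmbedding) = 𝔼 t ∈ powersetCard #s univ, f t := by
  have hconst : ∀ t ∈ powersetCard #s univ,
      𝔼 σ : α ≃ β, f (t.map σ.toEmbedding) = 𝔼 σ : α ≃ β, f (s.map σ.toEmbedding) := by
    intro t ht
    obtain ⟨ρ, rfl⟩ : ∃ ρ : Equiv.Perm α, s.map ρ.toEmbedding = t := by
      have := Set.powersetCard.isPretransitive (α := α) (n := #s)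
      obtain ⟨ρ, hρ⟩ := MulAction.exists_smul_eq (Equiv.Perm α)
        (⟨s, rfl⟩ : Set.powersetCard α #s) ⟨t, mem_powersetCard_univ.mp ht⟩
      exact ⟨ρ, (map_eq_image _ s).trans (congrArg Subtype.val hρ)⟩
    refine expect_equiv (Equiv.equivCongr ρ.symm (Equiv.refl β)) (by simp) fun σ _ => ?_
    rw [map_map]
    rfl
  calc 𝔼 σ : α ≃ β, f (s.map σ.toEmbedding)
      = 𝔼 t ∈ powersetCard #s univ, 𝔼 σ : α ≃ β, f (t.map σ.toEmbedding) := by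
        rw [expect_congr rfl hconst, expect_const ⟨s, by simp⟩]
    _ = 𝔼 σ : α ≃ β, 𝔼 t ∈ powersetCard #s univ, f (t.map σ.toEmbedding) := expect_comm ..
    _ = 𝔼 _σ : α ≃ β, 𝔼 t ∈ powersetCard #s univ, f t :=
        expect_congr rfl fun σ _ => expect_equiv σ.finsetCongr (by simp) (by simp)
    _ = 𝔼 t ∈ powersetCard #s univ, f t := Fintype.expect_const _

theorem expect_ite_map_equiv_mem {α β V W : Type*} [Fintype α] [Fintype β] [Fintype V] [Fintype W]
    [DecidableEq α] [DecidableEq β] [DecidableEq V] [DecidableEq W] [Nonempty (α ≃ V)]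
    [Nonempty (β ≃ W)] (s : Finset α) (t : Finset β) (G : Finset (Finset V × Finset W)) :
    𝔼 σ : α ≃ V, 𝔼 τ : β ≃ W,
        (if (s.map σ.toEmbedding, t.map τ.toEmbedding) ∈ G then 1 else 0 : ℚ) =
      #{A ∈ G | #A.1 = #s ∧ #A.2 = #t} /
        ((Fintype.card V).choose #s * (Fintype.card W).choose #t) := by
  let mem (A : Finset V × Finset W) : ℚ := if A ∈ G then 1 else 0
  have hfilter : {A ∈ powersetCard #s (univ : Finset V) ×ˢ powersetCard #t (univ : Finset W) |
      A ∈ G} = {A ∈ G | #A.1 = #s ∧ #A.2 = #t} := by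
    ext A
    simp [and_comm]
  calc 𝔼 σ : α ≃ V, 𝔼 τ : β ≃ W, mem (s.map σ.toEmbedding, t.map τ.toEmbedding)
      = 𝔼 σ : α ≃ V, 𝔼 B ∈ powersetCard #t univ, mem (s.map σ.toEmbedding, B) :=
        expect_congr rfl fun _ _ => expect_map_equiv t fun B => mem (_, B)
    _ = 𝔼 A ∈ powersetCard #s univ ×ˢ powersetCard #t univ, mem A := by
        rw [expect_map_equiv s fun A => 𝔼 B ∈ powersetCard #t univ, mem (A, B), expect_product]
    _ = _ := by
        simp only [expect_eq_sum_div_card, mem, sum_boole, hfilter, card_product,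
          card_powersetCard, card_univ, Nat.cast_mul]

section Average

variable {V W ι : Type*} [DecidableEq V] [DecidableEq W] {n₁ n₂ : ℕ} [NeZero n₁] [NeZero n₂]

/-- The pairs of starting points of those pairs of arcs, of lengths `k` and `ℓ`, that the
bijections `σ` and `τ` send to a member of `G`. -/
def arcPairs (G : Finset (Finset V × Finset W)) (k ℓ : ℕ) (σ : ZMod n₁ ≃ V) (τ : ZMod n₂ ≃ W) :
    Finset (ZMod n₁ × ZMod n₂) :=
  {p | ((cyclicArc p.1 k).map σ.toEmbedding, (cyclicArc p.2 ℓ).map τ.toEmbedding) ∈ G}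

theorem arcPairsIntersect_arcPairs {G : Finset (Finset V × Finset W)}
    (hG : ∀ A ∈ G, ∀ B ∈ G, ¬Disjoint A.1 B.1 ∨ ¬Disjoint A.2 B.2) (k ℓ : ι → ℕ)
    (σ : ZMod n₁ ≃ V) (τ : ZMod n₂ ≃ W) :
    ArcPairsIntersect k ℓ fun i => arcPairs G (k i) (ℓ i) σ τ := by
  intro i j p hp q hq
  simpa only [disjoint_map] using hG _ (mem_filter.mp hp).2 _ (mem_filter.mp hq).2

variable [Fintype V] [Fintype W]

theorem card_mul_eq_choose_mul_expect_card_arcPairs (hV : Fintype.card V = n₁)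
    (hW : Fintype.card W = n₂) (G : Finset (Finset V × Finset W)) {k ℓ : ℕ} (hk : k ≤ n₁)
    (hℓ : ℓ ≤ n₂) :
    (n₁ * n₂ * #{A ∈ G | #A.1 = k ∧ #A.2 = ℓ} : ℚ) =
      n₁.choose k * n₂.choose ℓ *
        𝔼 σ : ZMod n₁ ≃ V, 𝔼 τ : ZMod n₂ ≃ W, (#(arcPairs G k ℓ σ τ) : ℚ) := by
  have : Nonempty (ZMod n₁ ≃ V) := ⟨Fintype.equivOfCardEq (by rw [ZMod.card, hV])⟩
  have : Nonempty (ZMod n₂ ≃ W) := ⟨Fintype.equivOfCardEq (by rw [ZMod.card, hW])⟩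
  have hc₁ : (n₁.choose k : ℚ) ≠ 0 := mod_cast (Nat.choose_pos hk).ne'
  have hc₂ : (n₂.choose ℓ : ℚ) ≠ 0 := mod_cast (Nat.choose_pos hℓ).ne'
  simp only [arcPairs, ← sum_boole, expect_sum_comm, expect_ite_map_equiv_mem, card_cyclicArc _ hk,
    card_cyclicArc _ hℓ, hV, hW, sum_const, card_univ, Fintype.card_prod, ZMod.card, nsmul_eq_mul,
    Nat.cast_mul]
  field_simp

theorem exists_mul_card_le_sum_choose_mul_card_arcPairs [Fintype ι] (hV : Fintype.card V = n₁)
    (hW : Fintype.card W = n₂) {G : Finset (Finset V × Finset W)} {k ℓ : ι → ℕ}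
    (hsizes : ∀ A ∈ G, ∃ i, #A.1 = k i ∧ #A.2 = ℓ i) (hk : ∀ i, k i ≤ n₁) (hℓ : ∀ i, ℓ i ≤ n₂) :
    ∃ (σ : ZMod n₁ ≃ V) (τ : ZMod n₂ ≃ W), n₁ * n₂ * #G ≤
      ∑ i, n₁.choose (k i) * n₂.choose (ℓ i) * #(arcPairs G (k i) (ℓ i) σ τ) := by
  have : Nonempty (ZMod n₁ ≃ V) := ⟨Fintype.equivOfCardEq (by rw [ZMod.card, hV])⟩
  have : Nonempty (ZMod n₂ ≃ W) := ⟨Fintype.equivOfCardEq (by rw [ZMod.card, hW])⟩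
  have hshapes : #G ≤ ∑ i, #{A ∈ G | #A.1 = k i ∧ #A.2 = ℓ i} := by
    refine (card_le_card fun A hA => ?_).trans card_biUnion_le
    obtain ⟨i, hi⟩ := hsizes A hA
    exact mem_biUnion.mpr ⟨i, mem_univ i, mem_filter.mpr ⟨hA, hi⟩⟩
  have havg : (n₁ * n₂ * #G : ℚ) ≤ 𝔼 σ : ZMod n₁ ≃ V, 𝔼 τ : ZMod n₂ ≃ W,
      ∑ i, (n₁.choose (k i) * n₂.choose (ℓ i) * #(arcPairs G (k i) (ℓ i) σ τ) : ℚ) := by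
    calc (n₁ * n₂ * #G : ℚ)
        ≤ n₁ * n₂ * ∑ i, (#{A ∈ G | #A.1 = k i ∧ #A.2 = ℓ i} : ℚ) := by
          gcongr
          exact_mod_cast hshapes
      _ = _ := by
          simp only [mul_sum, expect_sum_comm, ← mul_expect,
            card_mul_eq_choose_mul_expect_card_arcPairs hV hW G (hk _) (hℓ _)]
  obtain ⟨σ, -, hσ⟩ := exists_le_of_le_expect univ_nonempty havg
  obtain ⟨τ, -, hτ⟩ := exists_le_of_le_expect univ_nonempty hσ
  exact ⟨σ, τ, mod_cast hτ⟩

end Average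

/-! ### The bound -/

theorem choose_mul_eq_mul_choose_sub_one {n k : ℕ} (hn : 0 < n) (hk : 0 < k) :
    n.choose k * k = n * (n - 1).choose (k - 1) := by
  simpa only [Nat.sub_add_cancel hn, Nat.sub_add_cancel hk] using
    (Nat.add_one_mul_choose_eq (n - 1) (k - 1)).symm

theorem card_pairs_le_of_intersecting {V W ι : Type*} [Fintype V] [Fintype W] [Fintype ι]
    {n₁ n₂ r s : ℕ} (hV : Fintype.card V = n₁) (hW : Fintype.card W = n₂) {k ℓ : ι → ℕ}
    (hkpos : ∀ i, 0 < k i) (hℓpos : ∀ i, 0 < ℓ i) (hk : ∀ i, k i ≤ r) (hℓ : ∀ i, ℓ i ≤ s)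
    (hn₁ : 8 * r * s ≤ n₁) (hn₂ : 8 * r * s ≤ n₂)
    {G : Finset (Finset V × Finset W)} (hsizes : ∀ A ∈ G, ∃ i, #A.1 = k i ∧ #A.2 = ℓ i)
    (hG : ∀ A ∈ G, ∀ B ∈ G, ¬Disjoint A.1 B.1 ∨ ¬Disjoint A.2 B.2) :
    #G ≤ max (∑ i, n₁.choose (k i) * (n₂ - 1).choose (ℓ i - 1))
             (∑ i, (n₁ - 1).choose (k i - 1) * n₂.choose (ℓ i)) := by
  classical
  rcases G.eq_empty_or_nonempty with rfl | ⟨A, hA⟩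
  · simp
  obtain ⟨i, -⟩ := hsizes A hA
  have hr : 0 < r := (hkpos i).trans_le (hk i)
  have hs : 0 < s := (hℓpos i).trans_le (hℓ i)
  have hrn₁ : r ≤ n₁ := by nlinarith
  have hsn₂ : s ≤ n₂ := by nlinarith
  have : NeZero n₁ := ⟨by omega⟩
  have : NeZero n₂ := ⟨by omega⟩
  obtain ⟨σ, τ, hle⟩ := exists_mul_card_le_sum_choose_mul_card_arcPairs hV hW hsizes
    (fun i => (hk i).trans hrn₁) (fun i => (hℓ i).trans hsn₂)
  refine le_of_mul_le_mul_left (hle.trans ?_) (mul_pos (hr.trans_le hrn₁) (hs.trans_le hsn₂))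
  rcases (arcPairsIntersect_arcPairs hG k ℓ σ τ).card_le_or_card_le hkpos hℓpos hk hℓ hn₁ hn₂
    with hP | hP
  · refine le_trans ?_ (Nat.mul_le_mul_left _ (le_max_right _ _))
    rw [mul_sum]
    refine sum_le_sum fun i _ => ?_
    calc _ ≤ n₁.choose (k i) * n₂.choose (ℓ i) * (k i * n₂) := Nat.mul_le_mul_left _ (hP i)
      _ = n₁.choose (k i) * k i * (n₂ * n₂.choose (ℓ i)) := by ring
      _ = _ := by rw [choose_mul_eq_mul_choose_sub_one (NeZero.pos n₁) (hkpos i)]; ring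
  · refine le_trans ?_ (Nat.mul_le_mul_left _ (le_max_left _ _))
    rw [mul_sum]
    refine sum_le_sum fun i _ => ?_
    calc _ ≤ n₁.choose (k i) * n₂.choose (ℓ i) * (ℓ i * n₁) := Nat.mul_le_mul_left _ (hP i)
      _ = n₂.choose (ℓ i) * ℓ i * (n₁ * n₁.choose (k i)) := by ring
      _ = _ := by rw [choose_mul_eq_mul_choose_sub_one (NeZero.pos n₂) (hℓpos i)]; ring

theorem injOn_subtype_prod_subtype {α : Type*} [DecidableEq α] (X₁ X₂ : Finset α) :
    Set.InjOn (fun A : Finset α => (A.subtype (· ∈ X₁), A.subtype (· ∈ X₂)))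
      {A | A ⊆ X₁ ∪ X₂} := by
  have hrecover {A : Finset α} (hA : A ⊆ X₁ ∪ X₂) :
      (A.subtype (· ∈ X₁)).map (.subtype _) ∪ (A.subtype (· ∈ X₂)).map (.subtype _) = A := by
    rw [subtype_map, subtype_map, filter_mem_eq_inter, filter_mem_eq_inter,
      ← inter_union_distrib_left, inter_eq_left.mpr hA]
  intro A hA B hB h
  obtain ⟨h₁, h₂⟩ := Prod.mk.inj h
  rw [← hrecover hA, h₁, h₂, hrecover hB]

theorem stmt12_general {α ι : Type*} [DecidableEq α] [Fintype ι] (X₁ X₂ : Finset α)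
    (n₁ n₂ r s : ℕ) (hn₁ : X₁.card = n₁) (hn₂ : X₂.card = n₂)
    (k ℓ : ι → ℕ) (hkpos : ∀ i, 0 < k i) (hlpos : ∀ i, 0 < ℓ i)
    (hk : ∀ i, k i ≤ r) (hl : ∀ i, ℓ i ≤ s)
    (h1 : 8 * r * s ≤ n₁) (h2 : 8 * r * s ≤ n₂)
    (F : Finset (Finset α)) (hsub : ∀ A ∈ F, A ⊆ X₁ ∪ X₂)
    (hsizes : ∀ A ∈ F, ∃ i, (A ∩ X₁).card = k i ∧ (A ∩ X₂).card = ℓ i)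
    (hint : ∀ A ∈ F, ∀ B ∈ F, (A ∩ B).Nonempty) :
    F.card ≤ max (∑ i, n₁.choose (k i) * (n₂ - 1).choose (ℓ i - 1))
                 (∑ i, (n₁ - 1).choose (k i - 1) * n₂.choose (ℓ i)) := by
  rw [← card_image_of_injOn ((injOn_subtype_prod_subtype X₁ X₂).mono hsub)]
  refine card_pairs_le_of_intersecting (by simpa using hn₁) (by simpa using hn₂) hkpos hlpos hk hl
    h1 h2 ?_ ?_
  · refine forall_mem_image.mpr fun A hA => ?_
    simpa only [card_subtype, filter_mem_eq_inter] using hsizes A hA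
  · refine forall_mem_image.mpr fun A hA => forall_mem_image.mpr fun B hB => ?_
    obtain ⟨x, hx⟩ := hint A hA B hB
    rw [mem_inter] at hx
    refine (mem_union.mp (hsub A hA hx.1)).imp (fun hx₁ => ?_) (fun hx₂ => ?_)
    · exact not_disjoint_iff.mpr ⟨⟨x, hx₁⟩, mem_subtype.mpr hx.1, mem_subtype.mpr hx.2⟩
    · exact not_disjoint_iff.mpr ⟨⟨x, hx₂⟩, mem_subtype.mpr hx.1, mem_subtype.mpr hx.2⟩

theorem stmt12 {α : Type*} [DecidableEq α] (X₁ X₂ : Finset α) (hdisj : Disjoint X₁ X₂)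
    (n₁ n₂ m b : ℕ) (hn₁ : X₁.card = n₁) (hn₂ : X₂.card = n₂)
    (k ℓ : Fin m → ℕ) (hkpos : ∀ i, 0 < k i) (hlpos : ∀ i, 0 < ℓ i)
    (hb : b = Finset.univ.sup (fun i => max (k i) (ℓ i)))
    (h1 : 9 * b ^ 2 ≤ n₁) (h2 : 9 * b ^ 2 ≤ n₂)
    (F : Finset (Finset α)) (hsub : ∀ A ∈ F, A ⊆ X₁ ∪ X₂)
    (hsizes : ∀ A ∈ F, ∃ i, (A ∩ X₁).card = k i ∧ (A ∩ X₂).card = ℓ i)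
    (hint : ∀ A ∈ F, ∀ B ∈ F, (A ∩ B).Nonempty) :
    F.card ≤ max (∑ i, n₁.choose (k i) * (n₂ - 1).choose (ℓ i - 1))
                 (∑ i, (n₁ - 1).choose (k i - 1) * n₂.choose (ℓ i)) := by
  have hle (i : Fin m) : k i ≤ b ∧ ℓ i ≤ b :=
    max_le_iff.mp (hb ▸ le_sup (f := fun i => max (k i) (ℓ i)) (mem_univ i))
  exact stmt12_general X₁ X₂ n₁ n₂ b b hn₁ hn₂ k ℓ hkpos hlpos (fun i => (hle i).1)
    (fun i => (hle i).2) (by nlinarith) (by nlinarith) F hsub hsizes hint
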